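/- arXiv:2512.01742 — 9 statements merged into one kernel-verified Lean document; each statement's English description precedes it below -/
import Mathlib

section
/- Let a < b be real numbers and let f : [a, b] → ℝ be a continuous, monotonically increasing function such that for every x ∈ [a, b) the upper right Dini derivative D⁺f(x) = limsup_{y → x⁺} (f(y) − f(x))/(y − x) is a (finite) real number. Then f is absolutely continuous on [a, b]: for every ε > 0 there exists δ > 0 such that for every finite collection of pairwise disjoint open subintervals (a₁, b₁), …, (a_m, b_m) of [a, b] with Σᵢ (bᵢ − aᵢ) < δ one has Σᵢ (f(bᵢ) − f(aᵢ)) < ε. -/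
open Filter Set

open MeasureTheory in
theorem aux_map_le (g : StieltjesFunction ℝ) (hg : Continuous g) [IsFiniteMeasure g.measure] :
    g.measure.map g ≤ volume := by
  rw [← hausdorffMeasure_real]
  refine Measure.le_hausdorffMeasure 1 _ 1 one_pos ?_
  intro s _
  rw [ENNReal.rpow_one, ← Metric.ediam_closure]
  refine (measure_mono subset_closure).trans ?_
  rw [Measure.map_apply hg.measurable isClosed_closure.measurableSet,
    (isClosed_closure.preimage hg).measurableSet.measure_eq_iSup_isCompact]
  refine iSup_le fun K => iSup_le fun hKs => iSup_le fun hK => ?_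
  rcases K.eq_empty_or_nonempty with rfl | hne
  · simp
  have h1 := hKs (hK.sInf_mem hne)
  have h2 := hKs (hK.sSup_mem hne)
  have hsub : K ⊆ Icc (sInf K) (sSup K) := fun x hx =>
    ⟨csInf_le hK.bddBelow hx, le_csSup hK.bddAbove hx⟩
  refine (measure_mono hsub).trans ?_
  rw [g.measure_Icc, hg.continuousAt.continuousWithinAt.leftLim_eq]
  refine le_trans ?_ (Metric.edist_le_ediam_of_mem h2 h1)
  rw [edist_dist, Real.dist_eq]
  exact ENNReal.ofReal_le_ofReal (le_abs_self _)

open MeasureTheory in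
theorem aux_ac (g : StieltjesFunction ℝ) (hg : Continuous g) [IsFiniteMeasure g.measure]
    (hD : ∀ x, ∃ L : ℝ, ∀ᶠ y in nhdsWithin x (Ioi x), g y - g x ≤ L * (y - x)) :
    g.measure ≪ volume := by
  intro N hN
  let E : ℕ → ℤ → Set ℝ := fun n k => {x | (∀ y, x < y → y < x + 1 / (n + 1) →
    g y - g x ≤ n * (y - x)) ∧ (k : ℝ) / (n + 1) ≤ x ∧ x < (k + 1) / (n + 1)}
  have hcov : N ⊆ ⋃ n, ⋃ k, (N ∩ E n k) := by
    intro x hx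
    obtain ⟨L, hL⟩ := hD x
    obtain ⟨u, hu, hsub⟩ := mem_nhdsGT_iff_exists_Ioo_subset.1 hL
    have hu : x < u := hu
    obtain ⟨n1, hn1⟩ := exists_nat_ge L
    obtain ⟨n2, hn2⟩ := exists_nat_one_div_lt (sub_pos.2 hu)
    set n := max n1 n2 with hn
    have hnp : (0 : ℝ) < n + 1 := by positivity
    refine mem_iUnion.2 ⟨n, mem_iUnion.2 ⟨⌊x * (n + 1)⌋, hx, ?_, ?_, ?_⟩⟩
    · intro y hy hy2
      have h1 : (1 : ℝ) / (n + 1) ≤ 1 / (n2 + 1) := by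
        apply one_div_le_one_div_of_le (by positivity)
        have : (n2 : ℝ) ≤ n := by exact_mod_cast le_max_right _ _
        linarith
      have h2 : g y - g x ≤ L * (y - x) := hsub ⟨hy, by linarith⟩
      have h3 : (n1 : ℝ) ≤ n := by exact_mod_cast le_max_left _ _
      have : L * (y - x) ≤ n * (y - x) :=
        mul_le_mul_of_nonneg_right (by linarith) (by linarith)
      linarith
    · rw [div_le_iff₀ hnp]; exact Int.floor_le _
    · rw [lt_div_iff₀ hnp]; exact Int.lt_floor_add_one _
  refine measure_mono_null hcov ?_
  refine measure_iUnion_null fun n => measure_iUnion_null fun k => ?_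
  have hlip : LipschitzOnWith (n : NNReal) g (N ∩ E n k) := by
    have key : ∀ x ∈ N ∩ E n k, ∀ y ∈ N ∩ E n k, x < y → g y - g x ≤ n * (y - x) := by
      rintro x ⟨-, hx, hx1, hx2⟩ y ⟨-, hy, hy1, hy2⟩ hxy
      refine hx y hxy ?_
      rw [add_div] at hy2
      linarith
    refine LipschitzOnWith.of_dist_le_mul fun x hx y hy => ?_
    rw [Real.dist_eq, Real.dist_eq, NNReal.coe_natCast]
    rcases lt_trichotomy x y with h | h | h
    · rw [abs_sub_comm, abs_sub_comm x, abs_of_nonneg (sub_nonneg.2 (g.mono h.le)),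
        abs_of_pos (sub_pos.2 h)]
      exact key x hx y hy h
    · simp [h]
    · rw [abs_of_nonneg (sub_nonneg.2 (g.mono h.le)), abs_of_pos (sub_pos.2 h)]
      exact key y hy x hx h
  have himg : volume (g '' (N ∩ E n k)) = 0 := by
    have h := hlip.hausdorffMeasure_image_le (d := 1) zero_le_one
    rw [hausdorffMeasure_real, measure_mono_null inter_subset_left hN, mul_zero] at h
    exact le_antisymm h bot_le
  have h1 : g.measure.map g (g '' (N ∩ E n k)) = 0 :=
    le_antisymm ((aux_map_le g hg _).trans himg.le) bot_le
  exact measure_mono_null (subset_preimage_image _ _)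
    (le_antisymm ((Measure.le_map_apply hg.measurable.aemeasurable _).trans h1.le) bot_le)

open MeasureTheory in
theorem aux_eps (μ ν : Measure ℝ) [IsFiniteMeasure μ] [SigmaFinite ν] (h : μ ≪ ν)
    {ε : ENNReal} (hε : ε ≠ 0) : ∃ δ > 0, ∀ s, ν s < δ → μ s < ε := by
  obtain ⟨δ, hδ, H⟩ := exists_pos_setLIntegral_lt_of_measure_lt (μ := ν) (f := μ.rnDeriv ν)
    (Measure.lintegral_rnDeriv_lt_top μ ν).ne hε
  refine ⟨δ, hδ, fun s hs => ?_⟩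
  have := H s hs
  rwa [Measure.setLIntegral_rnDeriv h] at this

/-- If `f : [a,b] → ℝ` is continuous and monotonically increasing and its upper right
Dini derivative is a finite real number at every point of `[a,b)`, then `f` is absolutely
continuous on `[a,b]`. -/
theorem stmt_0 (a b : ℝ) (hab : a < b) (f : ℝ → ℝ)
    (hcont : ContinuousOn f (Set.Icc a b))
    (hmono : MonotoneOn f (Set.Icc a b))
    (hDini : ∀ x ∈ Set.Ico a b, ∃ L : ℝ,
      Filter.limsup (fun y => (((f y - f x) / (y - x) : ℝ) : EReal))
        (nhdsWithin x (Set.Ioi x)) = (L : EReal)) :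
    ∀ ε > 0, ∃ δ > 0, ∀ (m : ℕ) (c d : ℕ → ℝ),
      (∀ i < m, a ≤ c i ∧ c i < d i ∧ d i ≤ b) →
      (∀ i < m, ∀ j < m, i ≠ j → Disjoint (Set.Ioo (c i) (d i)) (Set.Ioo (c j) (d j))) →
      (∑ i ∈ Finset.range m, (d i - c i)) < δ →
      (∑ i ∈ Finset.range m, (f (d i) - f (c i))) < ε := by
  intro ε hε
  have hp : ∀ x, max a (min b x) ∈ Icc a b := fun x =>
    ⟨le_max_left _ _, max_le hab.le (min_le_left _ _)⟩
  have hgc : Continuous (fun x => f (max a (min b x))) :=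
    hcont.comp_continuous (by fun_prop) hp
  have hgm : Monotone (fun x => f (max a (min b x))) := fun x y hxy =>
    hmono (hp x) (hp y) (max_le_max le_rfl (min_le_min le_rfl hxy))
  let g : StieltjesFunction ℝ :=
    ⟨fun x => f (max a (min b x)), hgm, fun x => hgc.continuousAt.continuousWithinAt⟩
  have hg : Continuous g := hgc
  have hgdef : ∀ x, g x = f (max a (min b x)) := fun _ => rfl
  have hgeq : ∀ x ∈ Icc a b, g x = f x := by
    intro x hx
    rw [hgdef, min_eq_right hx.2, max_eq_right hx.1]
  have : MeasureTheory.IsFiniteMeasure g.measure := by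
    refine g.isFiniteMeasure_of_forall_abs_le (C := max |f a| |f b|) fun x => ?_
    rw [hgdef]
    exact abs_le_max_abs_abs (hmono (left_mem_Icc.2 hab.le) (hp x) (hp x).1)
      (hmono (hp x) (right_mem_Icc.2 hab.le) (hp x).2)
  have hac : MeasureTheory.Measure.AbsolutelyContinuous g.measure MeasureTheory.volume := by
    refine aux_ac g hg fun x => ?_
    rcases lt_or_ge x a with hxa | hxa
    · refine ⟨0, ?_⟩
      filter_upwards [Ioo_mem_nhdsGT hxa] with y hy
      rw [hgdef, hgdef, max_eq_left ((min_le_right _ _).trans hy.2.le),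
        max_eq_left ((min_le_right _ _).trans hxa.le)]
      simp
    rcases lt_or_ge x b with hxb | hxb
    · obtain ⟨L, hL⟩ := hDini x ⟨hxa, hxb⟩
      refine ⟨L + 1, ?_⟩
      have hlt : Filter.limsup (fun y => (((f y - f x) / (y - x) : ℝ) : EReal))
        (nhdsWithin x (Set.Ioi x)) < ((L + 1 : ℝ) : EReal) := by
        rw [hL]; exact_mod_cast lt_add_one L
      filter_upwards [Filter.eventually_lt_of_limsup_lt hlt, Ioo_mem_nhdsGT hxb] with y hy hy2
      rw [hgeq x ⟨hxa, hxb.le⟩, hgeq y ⟨hxa.trans hy2.1.le, hy2.2.le⟩]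
      have h3 : (f y - f x) / (y - x) < L + 1 := by exact_mod_cast hy
      rw [div_lt_iff₀ (sub_pos.2 hy2.1)] at h3
      exact h3.le
    · refine ⟨0, ?_⟩
      filter_upwards [self_mem_nhdsWithin] with y hy
      have hy : x < y := hy
      rw [hgdef, hgdef, min_eq_left hxb, min_eq_left (hxb.trans hy.le)]
      simp
  obtain ⟨δ, hδ, H⟩ := aux_eps _ _ hac (ε := ENNReal.ofReal ε) (by simpa using hε)
  obtain ⟨δ', hδ', hlt⟩ : ∃ δ' : ℝ, 0 < δ' ∧ ENNReal.ofReal δ' ≤ δ := by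
    obtain ⟨r, hr0, hr⟩ := ENNReal.lt_iff_exists_nnreal_btwn.1 hδ
    exact ⟨r, by exact_mod_cast hr0, by simpa using hr.le⟩
  refine ⟨δ', hδ', fun m c d hcd hdisj hsum => ?_⟩
  have hvol : MeasureTheory.volume (⋃ i ∈ Finset.range m, Ioo (c i) (d i)) < δ := by
    refine (MeasureTheory.measure_biUnion_finset_le _ _).trans_lt ?_
    simp only [Real.volume_Ioo]
    rw [← ENNReal.ofReal_sum_of_nonneg]
    · exact lt_of_lt_of_le ((ENNReal.ofReal_lt_ofReal_iff hδ').2 hsum) hlt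
    · intro i hi
      linarith [(hcd i (Finset.mem_range.1 hi)).2.1]
  have h := H _ hvol
  rw [MeasureTheory.measure_biUnion_finset] at h
  · simp only [g.measure_Ioo, hg.continuousAt.continuousWithinAt.leftLim_eq] at h
    rw [← ENNReal.ofReal_sum_of_nonneg, ENNReal.ofReal_lt_ofReal_iff hε] at h
    · refine lt_of_eq_of_lt (Finset.sum_congr rfl fun i hi => ?_) h
      obtain ⟨h1, h2, h3⟩ := hcd i (Finset.mem_range.1 hi)
      rw [hgeq _ ⟨h1, h2.le.trans h3⟩, hgeq _ ⟨h1.trans h2.le, h3⟩]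
    · intro i hi
      exact sub_nonneg.2 (g.mono (hcd i (Finset.mem_range.1 hi)).2.1.le)
  · intro i hi j hj hij
    exact hdisj i (by simpa using hi) j (by simpa using hj) hij
  · intro i _
    exact measurableSet_Ioo
end

section
/- Let X be a real vector space, φ : X → ℝ a linear functional, (xₙ)_{n∈ℕ} a sequence in X, and x ∈ X. Suppose that for every subsequence (yₙ)_{n∈ℕ} of (xₙ)_{n∈ℕ} one has limsup_{n→∞} φ((1/n) Σ_{m=1}^{n} y_m) ≤ φ(x). Then limsup_{n→∞} φ(xₙ) ≤ φ(x). -/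
open Filter

/-- If for every subsequence of `x` the `limsup` of `φ` applied to the Cesàro averages is at
most `φ x₀`, then `limsup φ (x n) ≤ φ x₀`. -/
theorem stmt_1 {X : Type*} [AddCommGroup X] [Module ℝ X] (φ : X →ₗ[ℝ] ℝ)
    (x : ℕ → X) (x₀ : X)
    (h : ∀ ns : ℕ → ℕ, StrictMono ns →
      Filter.limsup
        (fun n : ℕ => ((φ ((n : ℝ)⁻¹ • ∑ m ∈ Finset.range n, x (ns m)) : ℝ) : EReal))
        Filter.atTop ≤ ((φ x₀ : ℝ) : EReal)) :
    Filter.limsup (fun n : ℕ => ((φ (x n) : ℝ) : EReal)) Filter.atTop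
      ≤ ((φ x₀ : ℝ) : EReal) := by
  by_contra hcon
  rw [not_le] at hcon
  obtain ⟨c, hc1, hc2⟩ := EReal.lt_iff_exists_real_btwn.1 hcon
  have hf : ∃ᶠ n in atTop, (c : EReal) < ((φ (x n) : ℝ) : EReal) :=
    Filter.frequently_lt_of_lt_limsup (by isBoundedDefault) hc2
  obtain ⟨ns, hns, hlt⟩ := Filter.extraction_of_frequently_atTop hf
  have hle : (c : EReal) ≤ Filter.limsup
        (fun n : ℕ => ((φ ((n : ℝ)⁻¹ • ∑ m ∈ Finset.range n, x (ns m)) : ℝ) : EReal))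
        Filter.atTop := by
    refine Filter.le_limsup_of_frequently_le (Filter.Eventually.frequently ?_)
      (by isBoundedDefault)
    filter_upwards [eventually_gt_atTop 0] with n hn
    have hn' : (0 : ℝ) < n := by exact_mod_cast hn
    rw [EReal.coe_le_coe_iff, map_smul, map_sum, smul_eq_mul, ← div_eq_inv_mul,
      le_div_iff₀ hn']
    have hs := Finset.card_nsmul_le_sum (Finset.range n) (fun m => φ (x (ns m))) c
      (fun m _ => (EReal.coe_lt_coe_iff.1 (hlt m)).le)
    rw [Finset.card_range, nsmul_eq_mul] at hs
    linarith
  exact absurd (hle.trans (h ns hns)) (not_le.2 hc1)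
end

section
/- Let X be a real vector space and (Bₙ)_{n∈ℕ} a sequence of symmetric, positive semidefinite, bilinear forms on X such that m ≤ n implies B_m(x, x) ≤ Bₙ(x, x) for every x ∈ X. Let Y = {x ∈ X : sup_{n∈ℕ} Bₙ(x, x) < ∞}. Then Y is a linear subspace of X; for all x, y ∈ Y the limit B(x, y) := lim_{n→∞} Bₙ(x, y) exists and equals lim_{n→∞} (1/4)[Bₙ(x + y, x + y) − Bₙ(x − y, x − y)]; and B : Y × Y → ℝ is a symmetric, positive semidefinite, bilinear form on Y. -/
open Filter

/-- A pointwise-on-the-diagonal bounded, monotone sequence of symmetric positive semidefinite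
bilinear forms converges on the subspace `Y` of points with bounded diagonal values to a
symmetric positive semidefinite bilinear form, given by the polarisation formula. -/
theorem stmt_3 {X : Type*} [AddCommGroup X] [Module ℝ X]
    (Bn : ℕ → X → X → ℝ)
    (haddl : ∀ n x x' y, Bn n (x + x') y = Bn n x y + Bn n x' y)
    (hsmull : ∀ n (c : ℝ) x y, Bn n (c • x) y = c * Bn n x y)
    (hsymm : ∀ n x y, Bn n x y = Bn n y x)
    (hpsd : ∀ n x, 0 ≤ Bn n x x)
    (hmono : ∀ m n, m ≤ n → ∀ x, Bn m x x ≤ Bn n x x)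
    (Y : Set X) (hY : Y = {x | ∃ C : ℝ, ∀ n, Bn n x x ≤ C}) :
    ((0 : X) ∈ Y ∧ (∀ x ∈ Y, ∀ y ∈ Y, x + y ∈ Y) ∧ (∀ (c : ℝ), ∀ x ∈ Y, c • x ∈ Y)) ∧
    ∃ B : X → X → ℝ,
      (∀ x ∈ Y, ∀ y ∈ Y,
        Filter.Tendsto (fun n => Bn n x y) Filter.atTop (nhds (B x y)) ∧
        Filter.Tendsto
          (fun n => (1 / 4) * (Bn n (x + y) (x + y) - Bn n (x - y) (x - y)))
          Filter.atTop (nhds (B x y))) ∧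
      (∀ x ∈ Y, ∀ y ∈ Y, B x y = B y x) ∧
      (∀ x ∈ Y, 0 ≤ B x x) ∧
      (∀ x ∈ Y, ∀ x' ∈ Y, ∀ y ∈ Y, B (x + x') y = B x y + B x' y) ∧
      (∀ (c : ℝ), ∀ x ∈ Y, ∀ y ∈ Y, B (c • x) y = c * B x y) := by
  have haddr : ∀ n x y y', Bn n x (y + y') = Bn n x y + Bn n x y' := by
    intro n x y y'
    rw [hsymm n x (y + y'), haddl, hsymm n y x, hsymm n y' x]
  have hsmulr : ∀ n (c : ℝ) x y, Bn n x (c • y) = c * Bn n x y := by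
    intro n c x y
    rw [hsymm n x (c • y), hsmull, hsymm n y x]
  have hsub : ∀ x y : X, x - y = x + (-1 : ℝ) • y := by
    intro x y
    rw [neg_one_smul, sub_eq_add_neg]
  have hplus : ∀ n x y, Bn n (x + y) (x + y) = Bn n x x + 2 * Bn n x y + Bn n y y := by
    intro n x y
    rw [haddl, haddr, haddr, hsymm n y x]
    ring
  have hminus : ∀ n x y, Bn n (x - y) (x - y) = Bn n x x - 2 * Bn n x y + Bn n y y := by
    intro n x y
    rw [hsub, hplus, hsmulr, hsmulr, hsmull]
    ring
  have hsmul2 : ∀ n (c : ℝ) x, Bn n (c • x) (c • x) = c ^ 2 * Bn n x x := by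
    intro n c x
    rw [hsmulr, hsmull]
    ring
  have h0 : (0 : X) ∈ Y := by
    rw [hY]
    refine ⟨0, fun n => ?_⟩
    have h := hsmul2 n 0 0
    rw [zero_smul] at h
    rw [h]
    simp
  have hadd : ∀ x ∈ Y, ∀ y ∈ Y, x + y ∈ Y := by
    rw [hY]
    rintro x ⟨C, hC⟩ y ⟨D, hD⟩
    refine ⟨2 * C + 2 * D, fun n => ?_⟩
    have h1 := hpsd n (x - y)
    rw [hminus] at h1
    rw [hplus]
    linarith [hC n, hD n]
  have hsm : ∀ (c : ℝ), ∀ x ∈ Y, c • x ∈ Y := by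
    rw [hY]
    rintro c x ⟨C, hC⟩
    refine ⟨c ^ 2 * C, fun n => ?_⟩
    rw [hsmul2]
    exact mul_le_mul_of_nonneg_left (hC n) (sq_nonneg c)
  have hdiag : ∀ x ∈ Y, ∃ l, Tendsto (fun n => Bn n x x) atTop (nhds l) := by
    rw [hY]
    rintro x ⟨C, hC⟩
    refine ⟨_, tendsto_atTop_ciSup (fun m n h => hmono m n h x) ⟨C, ?_⟩⟩
    rintro _ ⟨n, rfl⟩
    exact hC n
  have hpol : ∀ n x y,
      (1 / 4) * (Bn n (x + y) (x + y) - Bn n (x - y) (x - y)) = Bn n x y := by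
    intro n x y
    rw [hplus, hminus]
    ring
  have hlim : ∀ x ∈ Y, ∀ y ∈ Y,
      Tendsto (fun n => Bn n x y) atTop (nhds (limUnder atTop (fun n => Bn n x y))) := by
    intro x hx y hy
    apply tendsto_nhds_limUnder
    obtain ⟨a, ha⟩ := hdiag _ (hadd x hx y hy)
    obtain ⟨b, hb⟩ := hdiag (x - y) (by rw [hsub]; exact hadd x hx _ (hsm _ y hy))
    refine ⟨(1 / 4) * (a - b), ?_⟩
    have h := (ha.sub hb).const_mul (1 / 4 : ℝ)
    simpa only [hpol] using h
  refine ⟨⟨h0, hadd, hsm⟩, fun x y => limUnder atTop (fun n => Bn n x y), ?_, ?_, ?_, ?_, ?_⟩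
  · intro x hx y hy
    refine ⟨hlim x hx y hy, ?_⟩
    simp only [hpol]
    exact hlim x hx y hy
  · intro x _ y _
    simp only [hsymm _ x y]
  · intro x hx
    exact ge_of_tendsto' (hlim x hx x hx) (fun n => hpsd n x)
  · intro x hx x' hx' y hy
    refine tendsto_nhds_unique (hlim _ (hadd x hx x' hx') y hy) ?_
    simp only [haddl]
    exact (hlim x hx y hy).add (hlim x' hx' y hy)
  · intro c x hx y hy
    refine tendsto_nhds_unique (hlim _ (hsm c x hx) y hy) ?_
    simp only [hsmull]
    exact (hlim x hx y hy).const_mul c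
end

section
/- Let μ be a finite measure on a measurable space, (Tₙ)_{n∈ℕ} and T measurable real-valued functions with Tₙ → T in μ-measure, and suppose C := sup_{n∈ℕ} ∫ exp(Tₙ) dμ < ∞. Then exp(T) ∈ L¹(μ) with ∫ exp(T) dμ ≤ C, and for every p > 1 one has exp(T/p) ∈ L¹(μ) and exp(Tₙ/p) → exp(T/p) in L¹(μ); in particular ∫ exp(Tₙ/p) dμ → ∫ exp(T/p) dμ. -/
open Filter MeasureTheory

/-- If `Tₙ → T` in measure and `C = sup_n ∫ exp Tₙ dμ < ∞`, then `exp T ∈ L¹(μ)` with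
`∫ exp T dμ ≤ C`, and for every `p > 1`, `exp (T/p) ∈ L¹(μ)` and `exp (Tₙ/p) → exp (T/p)`
in `L¹(μ)`; in particular the integrals converge. -/
theorem stmt_11 {X : Type*} [MeasurableSpace X] (μ : Measure X) [IsFiniteMeasure μ]
    (Tn : ℕ → X → ℝ) (T : X → ℝ)
    (hTn : ∀ n, Measurable (Tn n)) (hT : Measurable T)
    (hconv : TendstoInMeasure μ Tn Filter.atTop T)
    (hint : ∀ n, Integrable (fun x => Real.exp (Tn n x)) μ)
    (hbdd : BddAbove (Set.range fun n => ∫ x, Real.exp (Tn n x) ∂μ)) :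
    Integrable (fun x => Real.exp (T x)) μ ∧
    (∫ x, Real.exp (T x) ∂μ) ≤ (⨆ n, ∫ x, Real.exp (Tn n x) ∂μ) ∧
    ∀ p : ℝ, 1 < p →
      Integrable (fun x => Real.exp (T x / p)) μ ∧
      Filter.Tendsto (fun n => ∫ x, |Real.exp (Tn n x / p) - Real.exp (T x / p)| ∂μ)
        Filter.atTop (nhds 0) ∧
      Filter.Tendsto (fun n => ∫ x, Real.exp (Tn n x / p) ∂μ)
        Filter.atTop (nhds (∫ x, Real.exp (T x / p) ∂μ)) := by
  classical
  set C : ℝ := ⨆ n, ∫ x, Real.exp (Tn n x) ∂μ with hC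
  have hle : ∀ n, ∫ x, Real.exp (Tn n x) ∂μ ≤ C := fun n => le_ciSup hbdd n
  have hC0 : 0 ≤ C := le_trans (integral_nonneg fun x => (Real.exp_pos _).le) (hle 0)
  have hlin : ∀ n, ∫⁻ x, ENNReal.ofReal (Real.exp (Tn n x)) ∂μ ≤ ENNReal.ofReal C := by
    intro n
    rw [← ofReal_integral_eq_lintegral_ofReal (hint n)
      (Eventually.of_forall fun x => (Real.exp_pos _).le)]
    exact ENNReal.ofReal_le_ofReal (hle n)
  have hfatou : ∫⁻ x, ENNReal.ofReal (Real.exp (T x)) ∂μ ≤ ENNReal.ofReal C := by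
    obtain ⟨ns, -, hns⟩ := hconv.exists_seq_tendsto_ae
    calc ∫⁻ x, ENNReal.ofReal (Real.exp (T x)) ∂μ
        = ∫⁻ x, liminf (fun i => ENNReal.ofReal (Real.exp (Tn (ns i) x))) atTop ∂μ := by
          apply lintegral_congr_ae
          filter_upwards [hns] with x hx
          exact ((ENNReal.tendsto_ofReal
            ((Real.continuous_exp.tendsto _).comp hx)).liminf_eq).symm
      _ ≤ liminf (fun i => ∫⁻ x, ENNReal.ofReal (Real.exp (Tn (ns i) x)) ∂μ) atTop :=
          lintegral_liminf_le fun i => (hTn (ns i)).exp.ennreal_ofReal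
      _ ≤ ENNReal.ofReal C :=
          liminf_le_of_frequently_le' <| .of_forall fun i => hlin (ns i)
  have hTint : Integrable (fun x => Real.exp (T x)) μ := by
    refine ⟨hT.exp.aestronglyMeasurable, ?_⟩
    rw [hasFiniteIntegral_iff_ofReal (Eventually.of_forall fun x => (Real.exp_pos _).le)]
    exact hfatou.trans_lt ENNReal.ofReal_lt_top
  refine ⟨hTint, ?_, ?_⟩
  · rw [← ofReal_integral_eq_lintegral_ofReal hTint
      (Eventually.of_forall fun x => (Real.exp_pos _).le)] at hfatou
    exact (ENNReal.ofReal_le_ofReal_iff hC0).1 hfatou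
  intro p hp
  have hp0 : 0 < p := by linarith
  have key : ∀ S : X → ℝ, Measurable S → Integrable (fun x => Real.exp (S x)) μ →
      Integrable (fun x => Real.exp (S x / p)) μ := by
    intro S hS hSi
    refine ((integrable_const (1 : ℝ)).add hSi).mono'
      (hS.div_const p).exp.aestronglyMeasurable (Eventually.of_forall fun x => ?_)
    rw [Real.norm_of_nonneg (Real.exp_pos _).le]
    simp only [Pi.add_apply]
    rcases le_total (S x) 0 with h | h
    · have : Real.exp (S x / p) ≤ 1 := Real.exp_le_one_iff.2 (div_nonpos_of_nonpos_of_nonneg h hp0.le)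
      linarith [Real.exp_pos (S x)]
    · have : Real.exp (S x / p) ≤ Real.exp (S x) := Real.exp_le_exp.2 (div_le_self h hp.le)
      linarith
  have hTp := key T hT hTint
  have hnp := fun n => key (Tn n) (hTn n) (hint n)
  have hui : UnifIntegrable (fun n x => Real.exp (Tn n x / p)) 1 μ := by
    refine unifIntegrable_of le_rfl ENNReal.one_ne_top (fun n => (hnp n).1) ?_
    intro ε hε
    obtain ⟨L, hL⟩ : ∃ L : ℝ, Real.exp (-(L * (p - 1))) * C ≤ ε := by
      refine ⟨Real.log ((C + 1) / ε) / (p - 1), ?_⟩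
      have h1 : 0 < (C + 1) / ε := by positivity
      rw [div_mul_cancel₀ _ (by linarith : p - 1 ≠ 0), Real.exp_neg, Real.exp_log h1, inv_div,
        div_mul_eq_mul_div, div_le_iff₀ (by linarith)]
      nlinarith
    refine ⟨⟨Real.exp L, (Real.exp_pos _).le⟩, fun n => ?_⟩
    rw [eLpNorm_one_eq_lintegral_enorm]
    calc _ ≤ ∫⁻ x, ENNReal.ofReal (Real.exp (-(L * (p - 1)))) *
            ENNReal.ofReal (Real.exp (Tn n x)) ∂μ := by
          apply lintegral_mono
          intro x
          simp only [Set.indicator_apply]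
          split_ifs with hx
          · rw [← ENNReal.ofReal_mul (Real.exp_pos _).le, ← Real.exp_add,
              Real.enorm_of_nonneg (Real.exp_pos _).le]
            apply ENNReal.ofReal_le_ofReal
            apply Real.exp_le_exp.2
            have hx' : Real.exp L ≤ Real.exp (Tn n x / p) := by
              have h2 : Real.exp L ≤ ‖Real.exp (Tn n x / p)‖ := hx
              rwa [Real.norm_of_nonneg (Real.exp_pos _).le] at h2
            have h3 := Real.exp_le_exp.1 hx'
            have h4 : Tn n x = Tn n x / p * p := by field_simp
            nlinarith
          · simp
      _ = ENNReal.ofReal (Real.exp (-(L * (p - 1)))) *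
            ∫⁻ x, ENNReal.ofReal (Real.exp (Tn n x)) ∂μ :=
          lintegral_const_mul _ (hTn n).exp.ennreal_ofReal
      _ ≤ ENNReal.ofReal (Real.exp (-(L * (p - 1)))) * ENNReal.ofReal C := by
          gcongr; exact hlin n
      _ ≤ ENNReal.ofReal ε := by
          rw [← ENNReal.ofReal_mul (Real.exp_pos _).le]
          exact ENNReal.ofReal_le_ofReal hL
  have hL1 : Tendsto (fun n => eLpNorm ((fun x => Real.exp (Tn n x / p)) -
      (fun x => Real.exp (T x / p))) 1 μ) atTop (nhds 0) := by
    refine tendsto_of_subseq_tendsto fun ns hns => ?_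
    obtain ⟨ms, -, hms⟩ := (hconv.comp hns).exists_seq_tendsto_ae
    refine ⟨ms, tendsto_Lp_finite_of_tendsto_ae
      (f := fun i x => Real.exp (Tn (ns (ms i)) x / p)) le_rfl ENNReal.one_ne_top
      (fun i => (hnp _).1) (memLp_one_iff_integrable.2 hTp) (fun ε hε => ?_) ?_⟩
    · obtain ⟨δ, hδ, h⟩ := hui hε
      exact ⟨δ, hδ, fun i s hs hμs => h _ s hs hμs⟩
    · filter_upwards [hms] with x hx
      exact (Real.continuous_exp.tendsto _).comp (hx.div_const p)
  have hlim : Tendsto (fun n => ∫ x, |Real.exp (Tn n x / p) - Real.exp (T x / p)| ∂μ)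
      atTop (nhds 0) := by
    have h := (ENNReal.tendsto_toReal ENNReal.zero_ne_top).comp hL1
    rw [ENNReal.toReal_zero] at h
    refine h.congr fun n => ?_
    simp only [Function.comp, eLpNorm_one_eq_lintegral_enorm]
    rw [← integral_norm_eq_lintegral_enorm ((hnp n).sub hTp).1]
    rfl
  refine ⟨hTp, hlim, ?_⟩
  rw [tendsto_iff_norm_sub_tendsto_zero]
  refine squeeze_zero (fun n => norm_nonneg _) (fun n => ?_) hlim
  rw [← integral_sub (hnp n) hTp]
  exact norm_integral_le_integral_norm _
end

section
/- Let μ be a probability measure on a measurable space, (Tₙ)_{n∈ℕ} a sequence in L¹(μ) with ∫ Tₙ dμ = 0 for every n and sup_{n∈ℕ} ∫ exp(Tₙ) dμ < ∞, and let T be a measurable function such that Tₙ → T in μ-measure. Then T ∈ L¹(μ), ∫ T dμ ≥ 0, and ∫ max{Tₙ − T, 0} dμ → 0 as n → ∞. -/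
open Filter MeasureTheory

/-- If `Tₙ ∈ L¹(μ)` with `∫ Tₙ dμ = 0`, `sup_n ∫ exp Tₙ dμ < ∞` and `Tₙ → T` in measure,
then `T ∈ L¹(μ)`, `∫ T dμ ≥ 0` and `∫ max {Tₙ − T, 0} dμ → 0`. -/
theorem stmt_12 {X : Type*} [MeasurableSpace X] (μ : Measure X) [IsProbabilityMeasure μ]
    (Tn : ℕ → X → ℝ) (T : X → ℝ)
    (hTnInt : ∀ n, Integrable (Tn n) μ)
    (hTnMean : ∀ n, (∫ x, Tn n x ∂μ) = 0)
    (hexpInt : ∀ n, Integrable (fun x => Real.exp (Tn n x)) μ)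
    (C : ℝ) (hC : ∀ n, (∫ x, Real.exp (Tn n x) ∂μ) ≤ C)
    (hT : Measurable T)
    (hconv : TendstoInMeasure μ Tn Filter.atTop T) :
    Integrable T μ ∧ 0 ≤ (∫ x, T x ∂μ) ∧
    Filter.Tendsto (fun n => ∫ x, max (Tn n x - T x) 0 ∂μ) Filter.atTop (nhds 0) := by
  have hC0 : 0 ≤ C := (integral_nonneg (fun x => (Real.exp_pos _).le)).trans (hC 0)
  have habs : ∀ n, ∫ x, ‖Tn n x‖ ∂μ ≤ 2 * C := by
    intro n
    have h1 : ∫ x, ‖Tn n x‖ ∂μ ≤ ∫ x, (2 * Real.exp (Tn n x) - Tn n x) ∂μ := by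
      refine integral_mono (hTnInt n).norm (((hexpInt n).const_mul 2).sub (hTnInt n)) ?_
      intro x
      simp only [Real.norm_eq_abs]
      have := Real.add_one_le_exp (Tn n x)
      have := Real.exp_pos (Tn n x)
      rcases abs_cases (Tn n x) with h | h <;> linarith
    rw [integral_sub ((hexpInt n).const_mul 2) (hTnInt n), integral_const_mul, hTnMean] at h1
    linarith [hC n]
  have hTint : Integrable T μ := by
    rw [← memLp_one_iff_integrable]
    refine ⟨hT.aestronglyMeasurable, ?_⟩
    refine lt_of_le_of_lt (eLpNorm_le_of_tendstoInMeasure (C := ENNReal.ofReal (2 * C))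
      (Eventually.of_forall fun n => ?_) hconv
      (fun n => (hTnInt n).aestronglyMeasurable)) ENNReal.ofReal_lt_top
    rw [eLpNorm_one_eq_lintegral_enorm, ← ofReal_integral_norm_eq_lintegral_enorm (hTnInt n)]
    exact ENNReal.ofReal_le_ofReal (habs n)
  have hDint : ∀ n, Integrable (fun x => max (Tn n x - T x) 0) μ :=
    fun n => ((hTnInt n).sub hTint).pos_part
  have hmin : ∀ K : ℝ, 0 < K → Tendsto
      (fun n => ∫ x, min (max (Tn n x - T x) 0) (K + |T x|) ∂μ) atTop (nhds 0) := by
    intro K hK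
    refine tendsto_of_subseq_tendsto fun ns hns => ?_
    obtain ⟨ms, _, hms⟩ := (hconv.comp hns).exists_seq_tendsto_ae
    refine ⟨ms, ?_⟩
    have h00 : nhds (0 : ℝ) = nhds (∫ x, (0 : ℝ) ∂μ) := by simp
    rw [h00]
    refine tendsto_integral_of_dominated_convergence (fun x => K + |T x|) (fun n => ?_)
      ((integrable_const K).add hTint.abs) (fun n => Eventually.of_forall fun x => ?_) ?_
    · exact (hDint _).aestronglyMeasurable.inf
        ((integrable_const K).add hTint.abs).aestronglyMeasurable
    · have h0 : 0 ≤ K + |T x| := by positivity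
      rw [Real.norm_eq_abs, abs_of_nonneg (le_min (le_max_right _ _) h0)]
      exact min_le_right _ _
    · filter_upwards [hms] with x hx
      have h0 : 0 ≤ K + |T x| := by positivity
      have := ((hx.sub_const (T x)).max (tendsto_const_nhds (x := (0 : ℝ)))).min
        (tendsto_const_nhds (x := K + |T x|))
      simpa [h0] using this
  have hpt : ∀ K : ℝ, 0 < K → ∀ n x, max (Tn n x - T x) 0 ≤
      min (max (Tn n x - T x) 0) (K + |T x|) + K⁻¹ * Real.exp (Tn n x) := by
    intro K hK n x
    have he := Real.exp_pos (Tn n x)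
    have hp : 0 < K⁻¹ * Real.exp (Tn n x) := by positivity
    rcases le_total (max (Tn n x - T x) 0) (K + |T x|) with h | h
    · rw [min_eq_left h]; linarith
    · rw [min_eq_right h]
      have hTa := neg_abs_le (T x)
      have hTb := abs_nonneg (T x)
      have hm : max (Tn n x - T x) 0 = Tn n x - T x := by
        rcases max_cases (Tn n x - T x) 0 with h' | h' <;> linarith
      rw [hm] at h ⊢
      have hk : K ≤ Tn n x := by linarith
      have hq := Real.quadratic_le_exp_of_nonneg (hK.le.trans hk)
      have : Tn n x - K ≤ K⁻¹ * Real.exp (Tn n x) := by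
        rw [inv_mul_eq_div, le_div_iff₀ hK]
        nlinarith [sq_nonneg (Tn n x - 2 * K), sq_nonneg (Tn n x)]
      linarith
  have hD : Tendsto (fun n => ∫ x, max (Tn n x - T x) 0 ∂μ) atTop (nhds 0) := by
    rw [Metric.tendsto_atTop]
    intro ε hε
    obtain ⟨K, hK, hKε⟩ : ∃ K : ℝ, 0 < K ∧ K⁻¹ * C < ε / 2 := by
      refine ⟨2 * (C + 1) / ε, by positivity, ?_⟩
      rw [inv_div, div_mul_eq_mul_div, div_lt_div_iff₀ (by positivity) (by positivity)]
      nlinarith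
    obtain ⟨N, hN⟩ := (Metric.tendsto_atTop.1 (hmin K hK)) (ε / 2) (by positivity)
    refine ⟨N, fun n hn => ?_⟩
    have h1 := hN n hn
    rw [Real.dist_eq, sub_zero] at h1 ⊢
    rw [abs_of_nonneg (integral_nonneg fun x => le_max_right _ _)]
    have hi : Integrable (fun x => min (max (Tn n x - T x) 0) (K + |T x|)) μ :=
      (hDint n).inf ((integrable_const K).add hTint.abs)
    have h2 := integral_mono (hDint n) (hi.add ((hexpInt n).const_mul K⁻¹)) (hpt K hK n)
    simp only [Pi.add_apply] at h2
    rw [integral_add hi ((hexpInt n).const_mul K⁻¹), integral_const_mul] at h2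
    have h3 : K⁻¹ * ∫ x, Real.exp (Tn n x) ∂μ ≤ K⁻¹ * C :=
      mul_le_mul_of_nonneg_left (hC n) (by positivity)
    linarith [le_abs_self (∫ x, min (max (Tn n x - T x) 0) (K + |T x|) ∂μ)]
  refine ⟨hTint, ?_, hD⟩
  have : -∫ x, T x ∂μ ≤ 0 := by
    refine ge_of_tendsto' hD fun n => ?_
    have h := integral_mono ((hTnInt n).sub hTint) (hDint n) (fun x => le_max_left _ _)
    simp only [Pi.sub_apply] at h
    rw [integral_sub (hTnInt n) hTint, hTnMean] at h
    linarith
  linarith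
end

section
/- Let μ be a probability measure on a measurable space X and let Y ⊆ L¹(μ) be a linear subspace such that exp(|S|) ∈ L¹(μ) for every S ∈ Y. Let T ∈ L¹(μ) with ∫ exp(T) dμ < ∞, let Z be the linear span of {T} ∪ Y, and let α : Z → ℝ be a linear functional satisfying the subgradient inequality α(R − T) ≤ ln ∫ exp(R) dμ − ln ∫ exp(T) dμ for every R ∈ Z (where ln ∫ exp(R) dμ ∈ (−∞, ∞]). Then T·exp(T) ∈ L¹(μ) and α(T) ≥ (∫ T·exp(T) dμ)/(∫ exp(T) dμ); moreover, for every S ∈ Y one has S·exp(T) ∈ L¹(μ) and α(S) = (∫ S·exp(T) dμ)/(∫ exp(T) dμ). -/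
open Filter MeasureTheory

/-- The difference quotient of `exp` at `t` in direction `r - t`. -/
noncomputable def dq (t r e : ℝ) : ℝ := (Real.exp (t + e * (r - t)) - Real.exp t) / e

lemma dq_lower (t r e : ℝ) (he : 0 < e) : (r - t) * Real.exp t ≤ dq t r e := by
  unfold dq
  rw [le_div_iff₀ he, Real.exp_add]
  have h1 := Real.add_one_le_exp (e * (r - t))
  nlinarith [Real.exp_pos t]

lemma exp_conv (t r e : ℝ) (he : 0 < e) (he1 : e ≤ 1) :
    Real.exp (t + e * (r - t)) ≤ (1 - e) * Real.exp t + e * Real.exp r := by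
  have := convexOn_exp.2 (Set.mem_univ t) (Set.mem_univ r) (sub_nonneg.2 he1) he.le (by ring)
  simp only [smul_eq_mul] at this
  refine le_trans (le_of_eq ?_) this
  congr 1
  ring

lemma dq_upper (t r e : ℝ) (he : 0 < e) (he1 : e ≤ 1) :
    dq t r e ≤ Real.exp r - Real.exp t := by
  unfold dq
  rw [div_le_iff₀ he]
  linarith [exp_conv t r e he he1]

lemma dq_zero_upper (t e : ℝ) (he : 0 < e) (he1 : e ≤ 1) : dq t 0 e ≤ |t| := by
  unfold dq
  rw [div_le_iff₀ he]
  have h1 := Real.add_one_le_exp (e * t)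
  have h2 : Real.exp t = Real.exp (t + e * (0 - t)) * Real.exp (e * t) := by
    rw [← Real.exp_add]; congr 1; ring
  have h3 := Real.exp_pos (t + e * (0 - t))
  rcases le_total 0 t with h | h
  · have : Real.exp (t + e * (0 - t)) ≤ Real.exp t := Real.exp_le_exp.2 (by nlinarith)
    nlinarith [abs_nonneg t]
  · have h4 : Real.exp (t + e * (0 - t)) ≤ 1 := Real.exp_le_one_iff.2 (by nlinarith)
    rw [abs_of_nonpos h, h2]
    nlinarith [mul_nonneg he.le (neg_nonneg.2 h)]

lemma dq_tendsto (t r : ℝ) :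
    Tendsto (fun n : ℕ => dq t r (1 / ((n : ℝ) + 1))) atTop (nhds ((r - t) * Real.exp t)) := by
  have h : HasDerivAt (fun e : ℝ => Real.exp (t + e * (r - t))) ((r - t) * Real.exp t) 0 := by
    have := (((hasDerivAt_id (0 : ℝ)).mul_const (r - t)).const_add t).exp
    simpa [mul_comm] using this
  have h2 := h.tendsto_slope_zero
  have h3 : Tendsto (fun n : ℕ => 1 / ((n : ℝ) + 1)) atTop (nhdsWithin 0 {0}ᶜ) := by
    refine tendsto_nhdsWithin_iff.2 ⟨tendsto_one_div_add_atTop_nhds_zero_nat, ?_⟩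
    refine Eventually.of_forall fun n => ?_
    have : (0 : ℝ) < 1 / ((n : ℝ) + 1) := by positivity
    exact this.ne'
  refine (h2.comp h3).congr fun n => ?_
  simp [dq, div_eq_inv_mul]

/-- A subgradient `α` at `T` of the convex functional `R ↦ ln ∫ exp R dμ` on the span `Z`
of `{T} ∪ Y` satisfies `α T ≥ (∫ T e^T dμ)/(∫ e^T dμ)` and, for every `S ∈ Y`,
`α S = (∫ S e^T dμ)/(∫ e^T dμ)`. -/
theorem stmt_13 {X : Type*} [MeasurableSpace X] (μ : Measure X) [IsProbabilityMeasure μ]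
    (Y : Submodule ℝ (X → ℝ))
    (hYL1 : ∀ S ∈ Y, Integrable S μ)
    (hYexp : ∀ S ∈ Y, Integrable (fun x => Real.exp |S x|) μ)
    (T : X → ℝ) (hTint : Integrable T μ)
    (hexpT : Integrable (fun x => Real.exp (T x)) μ)
    (Z : Submodule ℝ (X → ℝ))
    (hZ : Z = Submodule.span ℝ (insert T (Y : Set (X → ℝ))))
    (hTZ : T ∈ Z) (hYZ : ∀ S ∈ Y, S ∈ Z)
    (α : Z →ₗ[ℝ] ℝ)
    (hα : ∀ R : Z, Integrable (fun x => Real.exp ((R : X → ℝ) x)) μ →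
      α (R - ⟨T, hTZ⟩) ≤
        Real.log (∫ x, Real.exp ((R : X → ℝ) x) ∂μ) -
          Real.log (∫ x, Real.exp (T x) ∂μ)) :
    (Integrable (fun x => T x * Real.exp (T x)) μ ∧
      (∫ x, T x * Real.exp (T x) ∂μ) / (∫ x, Real.exp (T x) ∂μ) ≤ α ⟨T, hTZ⟩) ∧
    ∀ S : X → ℝ, ∀ hS : S ∈ Y,
      Integrable (fun x => S x * Real.exp (T x)) μ ∧
      α ⟨S, hYZ S hS⟩ = (∫ x, S x * Real.exp (T x) ∂μ) / (∫ x, Real.exp (T x) ∂μ) := by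
  set M := ∫ x, Real.exp (T x) ∂μ with hM
  have hMpos : 0 < M := integral_exp_pos hexpT
  have eps : ∀ n : ℕ, 0 < 1 / ((n : ℝ) + 1) ∧ 1 / ((n : ℝ) + 1) ≤ 1 := by
    intro n
    refine ⟨by positivity, ?_⟩
    rw [div_le_one (by positivity)]
    linarith [n.cast_nonneg (α := ℝ)]
  -- the main inequality for difference quotients
  have key : ∀ R : Z, AEStronglyMeasurable (R : X → ℝ) μ →
      Integrable (fun x => Real.exp ((R : X → ℝ) x)) μ →
      ∀ e : ℝ, 0 < e → e ≤ 1 →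
      Integrable (fun x => dq (T x) ((R : X → ℝ) x) e) μ ∧
        α (R - ⟨T, hTZ⟩) * M ≤ ∫ x, dq (T x) ((R : X → ℝ) x) e ∂μ := by
    intro R hRm hR e he he1
    have hm : AEStronglyMeasurable
        (fun x => Real.exp (T x + e * ((R : X → ℝ) x - T x))) μ :=
      Real.continuous_exp.comp_aestronglyMeasurable
        (hTint.1.add ((hRm.sub hTint.1).const_mul e))
    have hi : Integrable (fun x => Real.exp (T x + e * ((R : X → ℝ) x - T x))) μ := by
      refine Integrable.mono' ((hexpT.const_mul (1 - e)).add (hR.const_mul e)) hm ?_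
      refine Eventually.of_forall fun x => ?_
      rw [Real.norm_eq_abs, Real.abs_exp]
      exact exp_conv _ _ _ he he1
    refine ⟨(hi.sub hexpT).div_const e, ?_⟩
    have h1 := hα (⟨T, hTZ⟩ + e • (R - ⟨T, hTZ⟩)) (by simpa using hi)
    have h2 : (∫ x, Real.exp (((⟨T, hTZ⟩ + e • (R - ⟨T, hTZ⟩) : Z) : X → ℝ) x) ∂μ)
        = ∫ x, Real.exp (T x + e * ((R : X → ℝ) x - T x)) ∂μ := by simp
    rw [h2, add_sub_cancel_left, map_smul, smul_eq_mul] at h1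
    have hP : 0 < ∫ x, Real.exp (T x + e * ((R : X → ℝ) x - T x)) ∂μ := integral_exp_pos hi
    have h3 : ∫ x, dq (T x) ((R : X → ℝ) x) e ∂μ
        = ((∫ x, Real.exp (T x + e * ((R : X → ℝ) x - T x)) ∂μ) - M) / e := by
      unfold dq
      rw [integral_div, integral_sub hi hexpT]
    rw [h3, le_div_iff₀ he]
    set P := ∫ x, Real.exp (T x + e * ((R : X → ℝ) x - T x)) ∂μ
    rw [← Real.log_div hP.ne' hMpos.ne'] at h1
    have h4 := Real.log_le_sub_one_of_pos (div_pos hP hMpos)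
    have h5 : e * α (R - ⟨T, hTZ⟩) ≤ P / M - 1 := h1.trans h4
    have h6 : (P / M - 1) * M = P - M := by field_simp
    nlinarith [mul_le_mul_of_nonneg_right h5 hMpos.le]
  -- integrability of `T e^T` by Fatou
  have hTT : Integrable (fun x => T x * Real.exp (T x)) μ := by
    have hk := fun n : ℕ => key 0 (aestronglyMeasurable_const (b := (0 : ℝ)))
      (by simp) _ (eps n).1 (eps n).2
    simp only [ZeroMemClass.coe_zero, Pi.zero_apply, zero_sub, map_neg] at hk
    set G : ℕ → X → ℝ := fun n x => |T x| - dq (T x) 0 (1 / ((n : ℝ) + 1)) with hG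
    have hGi : ∀ n, Integrable (G n) μ := fun n => hTint.abs.sub (hk n).1
    have hG0 : ∀ n x, 0 ≤ G n x := fun n x =>
      sub_nonneg.2 (dq_zero_upper _ _ (eps n).1 (eps n).2)
    have hGt : ∀ x, Tendsto (fun n => G n x) atTop (nhds (|T x| + T x * Real.exp (T x))) := by
      intro x
      have := (dq_tendsto (T x) 0).const_sub |T x|
      convert this using 2
      ring
    have hmeas : AEStronglyMeasurable (fun x => |T x| + T x * Real.exp (T x)) μ :=
      hTint.abs.1.add (hTint.1.mul hexpT.1)
    have hH0 : ∀ x, 0 ≤ |T x| + T x * Real.exp (T x) := fun x =>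
      ge_of_tendsto' (hGt x) fun n => hG0 n x
    have hF : ∫⁻ x, ENNReal.ofReal (|T x| + T x * Real.exp (T x)) ∂μ
        ≤ ENNReal.ofReal ((∫ x, |T x| ∂μ) + α ⟨T, hTZ⟩ * M) := by
      calc ∫⁻ x, ENNReal.ofReal (|T x| + T x * Real.exp (T x)) ∂μ
          = ∫⁻ x, liminf (fun n => ENNReal.ofReal (G n x)) atTop ∂μ := by
            refine lintegral_congr fun x => ?_
            exact ((ENNReal.continuous_ofReal.tendsto _).comp (hGt x)).liminf_eq.symm
        _ ≤ liminf (fun n => ∫⁻ x, ENNReal.ofReal (G n x) ∂μ) atTop :=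
            lintegral_liminf_le' fun n => (hGi n).1.aemeasurable.ennreal_ofReal
        _ ≤ liminf (fun _ : ℕ => ENNReal.ofReal ((∫ x, |T x| ∂μ) + α ⟨T, hTZ⟩ * M)) atTop := by
            refine liminf_le_liminf (Eventually.of_forall fun n => ?_)
            rw [← ofReal_integral_eq_lintegral_ofReal (hGi n)
              (Eventually.of_forall (hG0 n))]
            refine ENNReal.ofReal_le_ofReal ?_
            have h1 : ∫ x, G n x ∂μ
                = (∫ x, |T x| ∂μ) - ∫ x, dq (T x) 0 (1 / ((n : ℝ) + 1)) ∂μ :=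
              integral_sub hTint.abs (hk n).1
            rw [h1]
            linarith [(hk n).2]
        _ = _ := by simp
    have hH : Integrable (fun x => |T x| + T x * Real.exp (T x)) μ := by
      refine ⟨hmeas, ?_⟩
      rw [hasFiniteIntegral_iff_ofReal (Eventually.of_forall hH0)]
      exact hF.trans_lt ENNReal.ofReal_lt_top
    refine (hH.sub hTint.abs).congr (Eventually.of_forall fun x => ?_)
    simp
  -- integrability of `S e^T` by Young
  have hST : ∀ S ∈ Y, Integrable (fun x => S x * Real.exp (T x)) μ := by
    intro S hS
    refine Integrable.mono' (((hYexp S hS).add hTT).sub hexpT)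
      ((hYL1 S hS).1.mul hexpT.1) (Eventually.of_forall fun x => ?_)
    simp only [Pi.add_apply, Pi.sub_apply]
    rw [norm_mul, Real.norm_eq_abs, Real.norm_eq_abs, Real.abs_exp]
    have h1 := Real.add_one_le_exp (|S x| - T x)
    have h2 : Real.exp |S x| = Real.exp (|S x| - T x) * Real.exp (T x) := by
      rw [← Real.exp_add]; congr 1; ring
    rw [h2]
    nlinarith [Real.exp_pos (T x)]
  have main : ∀ S : X → ℝ, ∀ hS : S ∈ Y, (α ⟨S, hYZ S hS⟩ - α ⟨T, hTZ⟩) * M ≤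
      (∫ x, S x * Real.exp (T x) ∂μ) - ∫ x, T x * Real.exp (T x) ∂μ := by
    intro S hS
    have hSe : Integrable (fun x => Real.exp (S x)) μ := by
      refine Integrable.mono' (hYexp S hS)
        (Real.continuous_exp.comp_aestronglyMeasurable (hYL1 S hS).1)
        (Eventually.of_forall fun x => ?_)
      rw [Real.norm_eq_abs, Real.abs_exp]
      exact Real.exp_le_exp.2 (le_abs_self _)
    have hk := fun n : ℕ => key ⟨S, hYZ S hS⟩ (hYL1 S hS).1 hSe _ (eps n).1 (eps n).2
    simp only [map_sub] at hk
    have hD : Integrable (fun x => (S x - T x) * Real.exp (T x)) μ := by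
      simp only [sub_mul]
      exact (hST S hS).sub hTT
    have hlim : Tendsto (fun n : ℕ => ∫ x, dq (T x) (S x) (1 / ((n : ℝ) + 1)) ∂μ) atTop
        (nhds (∫ x, (S x - T x) * Real.exp (T x) ∂μ)) := by
      refine tendsto_integral_of_dominated_convergence
        (fun x => |Real.exp (S x) - Real.exp (T x)| + |(S x - T x) * Real.exp (T x)|)
        (fun n => (hk n).1.1) ((hSe.sub hexpT).abs.add hD.abs) ?_ ?_
      · intro n
        refine Eventually.of_forall fun x => ?_
        have h1 := dq_lower (T x) (S x) _ (eps n).1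
        have h2 := dq_upper (T x) (S x) _ (eps n).1 (eps n).2
        rw [Real.norm_eq_abs, abs_le]
        constructor
        · linarith [neg_abs_le ((S x - T x) * Real.exp (T x)),
            abs_nonneg (Real.exp (S x) - Real.exp (T x))]
        · linarith [le_abs_self (Real.exp (S x) - Real.exp (T x)),
            abs_nonneg ((S x - T x) * Real.exp (T x))]
      · exact Eventually.of_forall fun x => dq_tendsto _ _
    have := ge_of_tendsto' hlim fun n => (hk n).2
    rw [← integral_sub (hST S hS) hTT]
    simpa only [sub_mul] using this
  refine ⟨⟨hTT, ?_⟩, fun S hS => ⟨hST S hS, ?_⟩⟩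
  · have h := main 0 Y.zero_mem
    have h0 : α ⟨0, hYZ 0 Y.zero_mem⟩ = 0 := α.map_zero
    rw [h0] at h
    simp only [Pi.zero_apply, zero_mul, integral_zero] at h
    rw [div_le_iff₀ hMpos]
    linarith
  · rw [eq_div_iff hMpos.ne']
    set A := α ⟨S, hYZ S hS⟩ * M - ∫ x, S x * Real.exp (T x) ∂μ with hA
    set B := α ⟨T, hTZ⟩ * M - ∫ x, T x * Real.exp (T x) ∂μ with hB
    have hc : ∀ c : ℝ, c * A ≤ B := by
      intro c
      have h := main (c • S) (Y.smul_mem c hS)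
      have h0 : α ⟨c • S, hYZ _ (Y.smul_mem c hS)⟩ = c * α ⟨S, hYZ S hS⟩ :=
        α.map_smul c ⟨S, hYZ S hS⟩
      have h1 : ∫ x, (c • S) x * Real.exp (T x) ∂μ = c * ∫ x, S x * Real.exp (T x) ∂μ := by
        rw [← integral_const_mul]
        simp [mul_assoc]
      rw [h0, h1] at h
      rw [hA, hB]
      linarith
    have hA0 : A = 0 := by
      by_contra hne
      have := hc ((B + 1) / A)
      rw [div_mul_cancel₀ _ hne] at this
      linarith
    linarith
end

section
/- Let μ be a probability measure on a measurable space and let S, S' be measurable real-valued functions with exp(S) ∈ L¹(μ) and exp(S') ∈ L¹(μ). Define f : [0, 1] → ℝ by f(t) = ln ∫ exp((1 − t)·S + t·S') dμ. Then f is real-valued and convex on [0, 1]; and if there exist 0 ≤ t₀ < t₁ ≤ 1 with f((t₀ + t₁)/2) = (f(t₀) + f(t₁))/2 (i.e. f fails to be strictly convex), then S' − S is μ-almost everywhere equal to a constant. -/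
open Filter MeasureTheory

/-- The function `f t = ln ∫ exp ((1−t)S + tS') dμ` is real-valued (the integrands are
integrable) and convex on `[0,1]`, and if it fails to be strictly convex then `S' − S` is
`μ`-almost everywhere constant. -/
theorem stmt_14 {X : Type*} [MeasurableSpace X] (μ : Measure X) [IsProbabilityMeasure μ]
    (S S' : X → ℝ) (hS : Measurable S) (hS' : Measurable S')
    (hexpS : Integrable (fun x => Real.exp (S x)) μ)
    (hexpS' : Integrable (fun x => Real.exp (S' x)) μ)
    (f : ℝ → ℝ)
    (hf : ∀ t : ℝ, f t = Real.log (∫ x, Real.exp ((1 - t) * S x + t * S' x) ∂μ)) :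
    (∀ t ∈ Set.Icc (0 : ℝ) 1,
      Integrable (fun x => Real.exp ((1 - t) * S x + t * S' x)) μ) ∧
    ConvexOn ℝ (Set.Icc (0 : ℝ) 1) f ∧
    (∀ t₀ t₁ : ℝ, 0 ≤ t₀ → t₀ < t₁ → t₁ ≤ 1 →
      f ((t₀ + t₁) / 2) = (f t₀ + f t₁) / 2 →
      ∃ c : ℝ, ∀ᵐ x ∂μ, S' x - S x = c) := by
  have hI : ∀ t ∈ Set.Icc (0 : ℝ) 1,
      Integrable (fun x => Real.exp ((1 - t) * S x + t * S' x)) μ := by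
    intro t ht
    refine Integrable.mono' ((hexpS.const_mul (1 - t)).add (hexpS'.const_mul t)) ?_ ?_
    · exact (Real.measurable_exp.comp
        ((hS.const_mul (1 - t)).add (hS'.const_mul t))).aestronglyMeasurable
    · refine Eventually.of_forall fun x => ?_
      rw [Real.norm_eq_abs, abs_of_pos (Real.exp_pos _)]
      have h := convexOn_exp.2 (Set.mem_univ (S x)) (Set.mem_univ (S' x))
        (by linarith [ht.2] : (0 : ℝ) ≤ 1 - t) ht.1 (by ring)
      simpa [smul_eq_mul] using h
  have hZ : ∀ t ∈ Set.Icc (0 : ℝ) 1,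
      Real.exp (f t) = ∫ x, Real.exp ((1 - t) * S x + t * S' x) ∂μ := by
    intro t ht
    rw [hf t, Real.exp_log]
    exact integral_exp_pos (hI t ht)
  -- normalized densities
  have hG : ∀ t ∈ Set.Icc (0 : ℝ) 1, ∀ c : ℝ,
      Integrable (fun x => Real.exp ((1 - t) * S x + t * S' x - c)) μ ∧
      ∫ x, Real.exp ((1 - t) * S x + t * S' x - c) ∂μ = Real.exp (f t - c) := by
    intro t ht c
    simp only [Real.exp_sub]
    exact ⟨(hI t ht).div_const _, by rw [integral_div, hZ t ht]⟩
  refine ⟨hI, ⟨convex_Icc _ _, ?_⟩, ?_⟩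
  · intro a ha b hb p q hp hq hpq
    have hm := convex_Icc (0 : ℝ) 1 ha hb hp hq hpq
    simp only [smul_eq_mul] at hm ⊢
    obtain ⟨i1, e1⟩ := hG a ha (f a)
    obtain ⟨i2, e2⟩ := hG b hb (f b)
    obtain ⟨i3, e3⟩ := hG _ hm (p * f a + q * f b)
    have key := integral_mono i3 ((i1.const_mul p).add (i2.const_mul q)) (fun x => by
      have h := convexOn_exp.2 (Set.mem_univ ((1 - a) * S x + a * S' x - f a))
        (Set.mem_univ ((1 - b) * S x + b * S' x - f b)) hp hq hpq
      simp only [smul_eq_mul] at h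
      have e : (1 - (p * a + q * b)) * S x + (p * a + q * b) * S' x - (p * f a + q * f b)
          = p * ((1 - a) * S x + a * S' x - f a) + q * ((1 - b) * S x + b * S' x - f b) := by
        linear_combination (-S x) * hpq
      simp only [Pi.add_apply]
      rw [e]
      exact h)
    simp only [Pi.add_apply] at key
    rw [e3, integral_add (i1.const_mul p) (i2.const_mul q), integral_const_mul,
      integral_const_mul, e1, e2, sub_self, sub_self, Real.exp_zero, mul_one, mul_one, hpq,
      Real.exp_le_one_iff] at key
    linarith
  · intro a b h0 hab h1 heq
    have ha : a ∈ Set.Icc (0 : ℝ) 1 := ⟨h0, by linarith⟩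
    have hb : b ∈ Set.Icc (0 : ℝ) 1 := ⟨by linarith, h1⟩
    have hm : (a + b) / 2 ∈ Set.Icc (0 : ℝ) 1 := ⟨by linarith, by linarith⟩
    obtain ⟨i1, e1⟩ := hG a ha (f a)
    obtain ⟨i2, e2⟩ := hG b hb (f b)
    obtain ⟨i3, e3⟩ := hG _ hm ((f a + f b) / 2)
    have e : ∀ x, (1 - (a + b) / 2) * S x + (a + b) / 2 * S' x - (f a + f b) / 2
          = (1 / 2 : ℝ) * ((1 - a) * S x + a * S' x - f a)
            + (1 / 2 : ℝ) * ((1 - b) * S x + b * S' x - f b) := fun x => by ring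
    have hle : (fun x => Real.exp ((1 - (a + b) / 2) * S x + (a + b) / 2 * S' x
        - (f a + f b) / 2)) ≤ᵐ[μ] (fun x => (1 / 2 : ℝ) * Real.exp ((1 - a) * S x + a * S' x - f a)
            + (1 / 2 : ℝ) * Real.exp ((1 - b) * S x + b * S' x - f b)) := by
      refine Eventually.of_forall fun x => ?_
      have h := convexOn_exp.2 (Set.mem_univ ((1 - a) * S x + a * S' x - f a))
        (Set.mem_univ ((1 - b) * S x + b * S' x - f b))
        (by norm_num : (0 : ℝ) ≤ 1 / 2) (by norm_num : (0 : ℝ) ≤ 1 / 2) (by norm_num)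
      simp only [smul_eq_mul] at h
      show Real.exp _ ≤ _
      rw [e]
      exact h
    have hae := (integral_eq_iff_of_ae_le i3
      ((i1.const_mul (1 / 2)).add (i2.const_mul (1 / 2))) hle).1 (by
        rw [e3, integral_add' (i1.const_mul _) (i2.const_mul _), integral_const_mul,
          integral_const_mul, e1, e2, heq]
        norm_num)
    refine ⟨(f b - f a) / (b - a), ?_⟩
    filter_upwards [hae] with x hx
    have hx' : (1 - a) * S x + a * S' x - f a = (1 - b) * S x + b * S' x - f b := by
      by_contra hne
      have h := strictConvexOn_exp.2 (Set.mem_univ ((1 - a) * S x + a * S' x - f a))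
        (Set.mem_univ ((1 - b) * S x + b * S' x - f b)) hne
        (by norm_num : (0 : ℝ) < 1 / 2) (by norm_num : (0 : ℝ) < 1 / 2) (by norm_num)
      simp only [smul_eq_mul] at h
      rw [← e] at h
      exact absurd hx h.ne
    rw [eq_div_iff (by linarith)]
    linarith
end

section
/- Let μ be a finite measure on a measurable space, Y ⊆ L¹(μ) a linear subspace, C ≥ 0, and α : Y → ℝ a linear functional satisfying α(T) ≤ C · ∫ max{T, 0} dμ for every T ∈ Y. Then there exists a μ-essentially bounded measurable function g with g ≥ 0 μ-almost everywhere, ‖g‖_{L^∞(μ)} ≤ C, and α(T) = ∫ g·T dμ for every T ∈ Y. -/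
open Filter MeasureTheory

/-- The integrable real functions, as a submodule of all functions. -/
def intFun {X : Type*} [MeasurableSpace X] (μ : Measure X) : Submodule ℝ (X → ℝ) where
  carrier := {f | Integrable f μ}
  add_mem' := fun hf hg => Integrable.add hf hg
  zero_mem' := integrable_zero _ _ _
  smul_mem' := fun c _ hf => Integrable.smul c hf

theorem intFun_congr {X : Type*} [MeasurableSpace X] {μ : Measure X}
    (D : intFun μ →ₗ[ℝ] ℝ) (K : ℝ) (hD : ∀ f : intFun μ, |D f| ≤ K * ∫ x, |f.1 x| ∂μ)
    (f g : intFun μ) (h : f.1 =ᵐ[μ] g.1) : D f = D g := by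
  have h1 := hD (f - g)
  have h2 : ∫ x, |(f - g).1 x| ∂μ = 0 := by
    apply integral_eq_zero_of_ae
    filter_upwards [h] with x hx
    simp [hx]
  rw [h2, mul_zero, map_sub] at h1
  have := abs_nonpos_iff.mp h1
  linarith

theorem intFun_zero {X : Type*} [MeasurableSpace X] {μ : Measure X} [IsFiniteMeasure μ]
    (D : intFun μ →ₗ[ℝ] ℝ) (K : ℝ) (hD : ∀ f : intFun μ, |D f| ≤ K * ∫ x, |f.1 x| ∂μ)
    (h0 : ∀ f : intFun μ, ∀ s, MeasurableSet s → f.1 = s.indicator (fun _ => (1 : ℝ)) → D f = 0)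
    (f : intFun μ) : D f = 0 := by
  have hcongr := intFun_congr D K hD
  let L0 : Lp ℝ 1 μ →ₗ[ℝ] ℝ :=
    { toFun := fun f => D ⟨f, L1.integrable_coeFn f⟩
      map_add' := fun f g => by
        rw [← map_add]
        exact hcongr _ _ (Lp.coeFn_add f g)
      map_smul' := fun c f => by
        rw [RingHom.id_apply, ← map_smul]
        exact hcongr _ _ (Lp.coeFn_smul c f) }
  let L : Lp ℝ 1 μ →L[ℝ] ℝ := L0.mkContinuous K (fun f => by
    rw [L1.norm_eq_integral_norm]
    exact hD _)
  have key : ∀ ⦃f : X → ℝ⦄, Integrable f μ → ∀ hf : Integrable f μ, D ⟨f, hf⟩ = 0 := by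
    apply Integrable.induction (P := fun f => ∀ hf : Integrable f μ, D ⟨f, hf⟩ = 0)
    · intro c s hs _ hf
      have h1 : Integrable (s.indicator (fun _ => (1 : ℝ))) μ :=
        (integrable_const _).indicator hs
      have : (⟨_, hf⟩ : intFun μ) = c • ⟨_, h1⟩ := by
        apply Subtype.ext
        funext x
        by_cases hx : x ∈ s <;> simp [hx]
      rw [this, map_smul, h0 _ s hs rfl, smul_zero]
    · intro f g _ hf hg h1 h2 h
      have : (⟨_, h⟩ : intFun μ) = ⟨f, hf⟩ + ⟨g, hg⟩ := rfl
      rw [this, map_add, h1, h2, add_zero]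
    · have : {f : Lp ℝ 1 μ | ∀ hf : Integrable f μ, D ⟨f, hf⟩ = 0} = {f | L f = 0} := by
        ext f
        exact ⟨fun h => h (L1.integrable_coeFn f), fun h _ => h⟩
      rw [this]
      exact isClosed_eq L.continuous continuous_const
    · intro f g hfg hf h hg
      rw [← h hf]
      exact (hcongr _ _ hfg).symm
  exact key f.2 f.2

theorem intFun_riesz {X : Type*} [MeasurableSpace X] {μ : Measure X} [IsFiniteMeasure μ]
    (D : intFun μ →ₗ[ℝ] ℝ) (K : ℝ) (hK : 0 ≤ K)
    (hD : ∀ f : intFun μ, |D f| ≤ K * ∫ x, |f.1 x| ∂μ) :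
    ∃ h : X → ℝ, Integrable h μ ∧ Measurable h ∧
      ∀ f : intFun μ, ∀ s, MeasurableSet s → f.1 = s.indicator (fun _ => (1 : ℝ)) →
        D f = ∫ x in s, h x ∂μ := by
  have hcongr := intFun_congr D K hD
  have hi : ∀ f : Lp ℝ 2 μ, Integrable f μ := fun f => (Lp.memLp f).integrable (by norm_num)
  let L0 : Lp ℝ 2 μ →ₗ[ℝ] ℝ :=
    { toFun := fun f => D ⟨f, hi f⟩
      map_add' := fun f g => by
        rw [← map_add]
        exact hcongr _ _ (Lp.coeFn_add f g)
      map_smul' := fun c f => by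
        rw [RingHom.id_apply, ← map_smul]
        exact hcongr _ _ (Lp.coeFn_smul c f) }
  let M : ENNReal := μ Set.univ ^ (1 / (1 : ENNReal).toReal - 1 / (2 : ENNReal).toReal)
  have hM : M ≠ ⊤ := ENNReal.rpow_ne_top_of_nonneg (by norm_num) (measure_ne_top _ _)
  let L : Lp ℝ 2 μ →L[ℝ] ℝ := L0.mkContinuous (K * M.toReal) (fun f => by
    refine (hD ⟨f, hi f⟩).trans ?_
    rw [mul_assoc]
    refine mul_le_mul_of_nonneg_left ?_ hK
    have h1 := eLpNorm_le_eLpNorm_mul_rpow_measure_univ (μ := μ) (p := 1) (q := 2)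
      (by norm_num) (hi f).aestronglyMeasurable
    have h2 : ∫ x, |f x| ∂μ = (eLpNorm f 1 μ).toReal := by
      refine (L1.norm_of_fun_eq_integral_norm (hi f)).symm.trans ?_
      rw [Integrable.toL1, Lp.norm_toLp]
    change ∫ x, |f x| ∂μ ≤ _
    rw [h2, Lp.norm_def, mul_comm, ← ENNReal.toReal_mul]
    exact ENNReal.toReal_mono (ENNReal.mul_ne_top (Lp.eLpNorm_ne_top f) hM) h1)
  let h := (InnerProductSpace.toDual ℝ (Lp ℝ 2 μ)).symm L
  refine ⟨h, hi h, (Lp.stronglyMeasurable h).measurable, ?_⟩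
  intro f s hs hf
  rw [← L2.inner_indicatorConstLp_one (𝕜 := ℝ) hs (measure_ne_top μ s) h, real_inner_comm,
    InnerProductSpace.toDual_symm_apply]
  refine hcongr _ ⟨_, hi _⟩ ?_
  rw [hf]
  exact indicatorConstLp_coeFn.symm

/-- A linear functional `α` on a subspace `Y ⊆ L¹(μ)` with `α T ≤ C ∫ max {T, 0} dμ` is
represented by integration against a nonnegative function `g ∈ L^∞(μ)` with
`‖g‖_{L^∞} ≤ C`. -/
theorem stmt_16 {X : Type*} [MeasurableSpace X] (μ : Measure X) [IsFiniteMeasure μ]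
    (Y : Submodule ℝ (X → ℝ))
    (hYL1 : ∀ T ∈ Y, Integrable T μ)
    (C : ℝ) (hC : 0 ≤ C)
    (α : Y →ₗ[ℝ] ℝ)
    (hα : ∀ T : X → ℝ, ∀ hT : T ∈ Y, α ⟨T, hT⟩ ≤ C * ∫ x, max (T x) 0 ∂μ) :
    ∃ g : X → ℝ, Measurable g ∧ (∀ᵐ x ∂μ, 0 ≤ g x ∧ g x ≤ C) ∧
      ∀ T : X → ℝ, ∀ hT : T ∈ Y, α ⟨T, hT⟩ = ∫ x, g x * T x ∂μ := by
  let YY : Submodule ℝ (intFun μ) := Y.comap (intFun μ).subtype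
  let aY : YY →ₗ[ℝ] ℝ :=
    { toFun := fun f => α ⟨f.1.1, f.2⟩
      map_add' := fun f g => by rw [← map_add]; rfl
      map_smul' := fun c f => by rw [← map_smul]; rfl }
  have hpos : ∀ f : intFun μ, Integrable (fun x => max (f.1 x) 0) μ := fun f =>
    Integrable.pos_part f.2
  obtain ⟨β, hβ1, hβ2⟩ := exists_extension_of_le_sublinear (E := intFun μ) ⟨YY, aY⟩
    (fun f => C * ∫ x, max (f.1 x) 0 ∂μ)
    (by
      intro c hc f
      have : ∀ x, max ((c • f).1 x) 0 = c * max (f.1 x) 0 := fun x => by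
        rw [mul_max_of_nonneg _ _ hc.le, mul_zero]; rfl
      simp_rw [this, integral_const_mul]
      ring)
    (by
      intro f g
      rw [← mul_add, ← integral_add (hpos f) (hpos g)]
      refine mul_le_mul_of_nonneg_left ?_ hC
      refine integral_mono (hpos _) ((hpos f).add (hpos g)) fun x => ?_
      change max (f.1 x + g.1 x) 0 ≤ max (f.1 x) 0 + max (g.1 x) 0
      exact max_le (add_le_add (le_max_left _ _) (le_max_left _ _))
        (add_nonneg (le_max_right _ _) (le_max_right _ _)))
    (fun f => hα f.1.1 f.2)
  have hle : ∀ f : intFun μ, β f ≤ C * ∫ x, |f.1 x| ∂μ := fun f => by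
    refine (hβ2 f).trans (mul_le_mul_of_nonneg_left ?_ hC)
    exact integral_mono (hpos f) (Integrable.abs f.2)
      fun x => max_le (le_abs_self _) (abs_nonneg _)
  have habs : ∀ f : intFun μ, |β f| ≤ C * ∫ x, |f.1 x| ∂μ := fun f => by
    refine abs_le'.mpr ⟨hle f, ?_⟩
    have := hle (-f)
    rw [map_neg] at this
    simpa using this
  obtain ⟨g, hgi, hgm, hg⟩ := intFun_riesz β C hC habs
  have hind : ∀ s, MeasurableSet s → Integrable (s.indicator (fun _ => (1 : ℝ))) μ :=
    fun s hs => (integrable_const _).indicator hs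
  have hg0 : 0 ≤ᵐ[μ] g := by
    refine ae_nonneg_of_forall_setIntegral_nonneg hgi fun s hs _ => ?_
    rw [← hg ⟨_, hind s hs⟩ s hs rfl]
    have h1 := hβ2 (-⟨_, hind s hs⟩)
    have h2 : ∀ x, max ((-(⟨_, hind s hs⟩ : intFun μ)).1 x) 0 = 0 := fun x => by
      by_cases hx : x ∈ s <;> simp [hx]
    simp_rw [h2] at h1
    rw [map_neg] at h1
    simp only [integral_zero, mul_zero] at h1
    linarith
  have hgC : g ≤ᵐ[μ] fun _ => C := by
    refine ae_le_of_forall_setIntegral_le hgi (integrable_const C) fun s hs _ => ?_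
    rw [← hg ⟨_, hind s hs⟩ s hs rfl]
    refine (hle _).trans (le_of_eq ?_)
    have h2 : ∀ x, |s.indicator (fun _ => (1 : ℝ)) x| = s.indicator (fun _ => (1 : ℝ)) x :=
      fun x => by by_cases hx : x ∈ s <;> simp [hx]
    simp_rw [h2]
    rw [integral_indicator hs, ← integral_const_mul]
    simp
  have hbd : ∀ᵐ x ∂μ, ‖g x‖ ≤ C := by
    filter_upwards [hg0, hgC] with x h1 h2
    rw [Real.norm_of_nonneg h1]
    exact h2
  have hmul : ∀ f : intFun μ, Integrable (fun x => g x * f.1 x) μ := fun f =>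
    Integrable.bdd_mul f.2 hgm.aestronglyMeasurable hbd
  let G : intFun μ →ₗ[ℝ] ℝ :=
    { toFun := fun f => ∫ x, g x * f.1 x ∂μ
      map_add' := fun f fb => by
        rw [← integral_add (hmul f) (hmul fb)]
        refine integral_congr_ae (Eventually.of_forall fun x => ?_)
        exact mul_add (g x) (f.1 x) (fb.1 x)
      map_smul' := fun c f => by
        rw [RingHom.id_apply, smul_eq_mul, ← integral_const_mul]
        refine integral_congr_ae (Eventually.of_forall fun x => ?_)
        exact mul_left_comm (g x) c (f.1 x) }
  have hGb : ∀ f : intFun μ, |G f| ≤ C * ∫ x, |f.1 x| ∂μ := fun f => by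
    rw [← integral_const_mul]
    refine (abs_integral_le_integral_abs).trans ?_
    refine integral_mono_ae (hmul f).abs ((Integrable.abs f.2).const_mul C) ?_
    filter_upwards [hbd] with x hx
    rw [abs_mul]
    exact mul_le_mul_of_nonneg_right hx (abs_nonneg _)
  have hzero := intFun_zero (β - G) (C + C)
    (fun f => by
      rw [LinearMap.sub_apply, add_mul]
      exact (abs_sub _ _).trans (add_le_add (habs f) (hGb f)))
    (fun f s hs hf => by
      rw [LinearMap.sub_apply, hg f s hs hf, sub_eq_zero, ← integral_indicator hs]
      refine integral_congr_ae (Eventually.of_forall fun x => ?_)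
      change _ = g x * f.1 x
      rw [hf]
      by_cases hx : x ∈ s <;> simp [hx])
  refine ⟨g, hgm, hg0.and hgC, fun T hT => ?_⟩
  have h1 := hβ1 ⟨⟨T, hYL1 T hT⟩, hT⟩
  have h2 := hzero ⟨T, hYL1 T hT⟩
  rw [LinearMap.sub_apply, sub_eq_zero] at h2
  exact h1.symm.trans h2
end

section
/- Let μ be a nonzero finite measure on a measurable space X and g : X → [0, ∞) a measurable function such that μ({x : g(x) ≤ δ}) > 0 for every δ > 0. Then for every ε > 0, the ratio (∫_{{g ≥ ε}} exp(−r·g(x)²/2) dμ(x)) / (∫_X exp(−r·g(x)²/2) dμ(x)) tends to 0 as r → ∞. -/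
open Filter MeasureTheory

/-- If `μ` is a nonzero finite measure and `g ≥ 0` is measurable with
`μ {g ≤ δ} > 0` for every `δ > 0`, then for every `ε > 0` the mass ratio
`(∫_{g ≥ ε} exp (−r g²/2) dμ) / (∫ exp (−r g²/2) dμ)` tends to `0` as `r → ∞`. -/
theorem stmt_18 {X : Type*} [MeasurableSpace X] (μ : Measure X) [IsFiniteMeasure μ]
    (hμ : μ ≠ 0)
    (g : X → ℝ) (hg : Measurable g) (hgnn : ∀ x, 0 ≤ g x)
    (hpos : ∀ δ > (0 : ℝ), 0 < μ {x | g x ≤ δ}) :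
    ∀ ε > (0 : ℝ),
      Filter.Tendsto
        (fun r : ℝ => (∫ x in {x | ε ≤ g x}, Real.exp (-(r * g x ^ 2) / 2) ∂μ) /
          (∫ x, Real.exp (-(r * g x ^ 2) / 2) ∂μ))
        Filter.atTop (nhds 0) := by
  intro ε hε
  have hA : MeasurableSet {x | ε ≤ g x} := measurableSet_le measurable_const hg
  have hB : MeasurableSet {x | g x ≤ ε / 2} := measurableSet_le hg measurable_const
  have hm : 0 < μ.real {x | g x ≤ ε / 2} :=
    ENNReal.toReal_pos (hpos _ (by positivity)).ne' (measure_ne_top _ _)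
  set m := μ.real {x | g x ≤ ε / 2} with hmdef
  set M := μ.real {x | ε ≤ g x} with hMdef
  have hM : 0 ≤ M := measureReal_nonneg
  have hint : ∀ r : ℝ, 0 ≤ r → Integrable (fun x => Real.exp (-(r * g x ^ 2) / 2)) μ := by
    intro r hr
    refine Integrable.of_bound (C := 1) (by fun_prop) (Eventually.of_forall fun x => ?_)
    rw [Real.norm_eq_abs, Real.abs_exp]
    apply Real.exp_le_one_iff.2
    have : 0 ≤ r * g x ^ 2 := by positivity
    linarith
  have hnum : ∀ r : ℝ, 0 ≤ r → ∫ x in {x | ε ≤ g x}, Real.exp (-(r * g x ^ 2) / 2) ∂μ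
      ≤ M * Real.exp (-(r * ε ^ 2) / 2) := by
    intro r hr
    calc _ ≤ ∫ x in {x | ε ≤ g x}, Real.exp (-(r * ε ^ 2) / 2) ∂μ := by
          refine setIntegral_mono_on (hint r hr).integrableOn
            (integrable_const _) hA fun x hx => ?_
          have hx' : ε ≤ g x := hx
          gcongr
      _ = _ := by rw [setIntegral_const, smul_eq_mul]
  have hden : ∀ r : ℝ, 0 ≤ r → m * Real.exp (-(r * (ε / 2) ^ 2) / 2) ≤
      ∫ x, Real.exp (-(r * g x ^ 2) / 2) ∂μ := by
    intro r hr
    calc _ = ∫ x in {x | g x ≤ ε / 2}, Real.exp (-(r * (ε / 2) ^ 2) / 2) ∂μ := by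
          rw [setIntegral_const, smul_eq_mul]
      _ ≤ ∫ x in {x | g x ≤ ε / 2}, Real.exp (-(r * g x ^ 2) / 2) ∂μ := by
          refine setIntegral_mono_on (integrable_const _) (hint r hr).integrableOn
            hB fun x hx => ?_
          have hx' : g x ≤ ε / 2 := hx
          have := hgnn x
          gcongr
      _ ≤ _ := setIntegral_le_integral (hint r hr)
          (Eventually.of_forall fun x => (Real.exp_pos _).le)
  have hlim : Tendsto (fun r : ℝ => M / m * Real.exp (-((3 * ε ^ 2 / 8) * r))) atTop (nhds 0) := by
    have h1 : Tendsto (fun r : ℝ => (3 * ε ^ 2 / 8) * r) atTop atTop :=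
      tendsto_id.const_mul_atTop (by positivity)
    simpa using (Real.tendsto_exp_neg_atTop_nhds_zero.comp h1).const_mul (M / m)
  refine squeeze_zero' (Eventually.of_forall fun r => ?_) ?_ hlim
  · exact div_nonneg (integral_nonneg fun x => (Real.exp_pos _).le)
      (integral_nonneg fun x => (Real.exp_pos _).le)
  · filter_upwards [eventually_ge_atTop 0] with r hr
    calc _ ≤ (M * Real.exp (-(r * ε ^ 2) / 2)) / (m * Real.exp (-(r * (ε / 2) ^ 2) / 2)) :=
          div_le_div₀ (by positivity) (hnum r hr) (by positivity) (hden r hr)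
      _ = _ := by
          rw [mul_div_mul_comm, ← Real.exp_sub]
          congr 2
          ring
end
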